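/- The quasi-consecutive patterns 1̲3̲4̲2 and 1̲2̲4̲3 are des-Wilf-equivalent: for all n ≥ 1 and k ≥ 0, the number of permutations of length n avoiding 1̲3̲4̲2 with exactly k descents equals the number of permutations of length n avoiding 1̲2̲4̲3 with exactly k descents. -/

import Mathlib

open scoped Classical

/-- The number of descents of a permutation of `Fin n` (one-line notation `π 0, π 1, …`). -/
def des {n : ℕ} (π : Equiv.Perm (Fin n)) : ℕ :=
  (Finset.univ.filter fun i : Fin n =>
    ∃ h : (i : ℕ) + 1 < n, π ⟨(i : ℕ) + 1, h⟩ < π i).card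

/-- `π` avoids the quasi-consecutive pattern 1̲3̲4̲2: there are no (0-indexed) positions
`i` and `j` with `i + 3 ≤ j < n` such that π_i < π_j < π_{i+1} < π_{i+2}. -/
def AvoidsA {n : ℕ} (π : Equiv.Perm (Fin n)) : Prop :=
  ¬ ∃ (i j : ℕ) (hj : j < n) (hij : i + 3 ≤ j), π ⟨i, by omega⟩ < π ⟨j, hj⟩ ∧ π ⟨j, hj⟩ < π ⟨i + 1, by omega⟩ ∧ π ⟨i + 1, by omega⟩ < π ⟨i + 2, by omega⟩

/-- `π` avoids the quasi-consecutive pattern 1̲2̲4̲3: there are no (0-indexed) positions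
`i` and `j` with `i + 3 ≤ j < n` such that π_i < π_{i+1} < π_j < π_{i+2}. -/
def AvoidsB {n : ℕ} (π : Equiv.Perm (Fin n)) : Prop :=
  ¬ ∃ (i j : ℕ) (hj : j < n) (hij : i + 3 ≤ j), π ⟨i, by omega⟩ < π ⟨i + 1, by omega⟩ ∧ π ⟨i + 1, by omega⟩ < π ⟨j, hj⟩ ∧ π ⟨j, hj⟩ < π ⟨i + 2, by omega⟩

/-!
Classify the avoiders of a given length by their first letter `a`: let `D a` and `U a` be the
descent polynomials of those which start with a descent (or have a single letter), respectively
with an ascent. Prepending a letter to a permutation expresses the polynomials `D'`, `U'` of the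
next length through `D` and `U`. For both patterns `D' a = X * ∑ b < a, (D b + U b)`. Avoiding
1̲3̲4̲2 gives `U' a = ∑ b ≥ a, D b + U a`. Avoiding 1̲2̲4̲3 gives instead
`U' a = ∑ b ≥ a, (D b + S b)`, where `S` counts the avoiders that start with two consecutive values
`a, a + 1`; these satisfy `S' a = D a + S a`. Therefore `U' a = ∑ b ≥ a, S' b` at every length,
which turns the recurrence for 1̲2̲4̲3 into the one for 1̲3̲4̲2.
-/

namespace QuasiConsecutive

open Equiv Finset Polynomial

section DescentPoly

variable {n : ℕ} {P Q : Perm (Fin n) → Prop}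

/-- The descent polynomial `∑ X ^ des π` of a class of permutations, given by its membership
predicate. -/
noncomputable def descentPoly (P : Perm (Fin n) → Prop) : ℕ[X] :=
  ∑ π with P π, X ^ des π

lemma coeff_descentPoly (P : Perm (Fin n) → Prop) (k : ℕ) :
    (descentPoly P).coeff k = Nat.card {π // P π ∧ des π = k} := by
  simp only [descentPoly, finsetSum_coeff, coeff_X_pow, sum_boole, filter_filter, Nat.cast_id,
    eq_comm (a := k), Nat.card_eq_fintype_card, Fintype.card_subtype]

lemma descentPoly_congr (h : ∀ π, P π ↔ Q π) : descentPoly P = descentPoly Q :=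
  congrArg descentPoly (funext fun π => propext (h π))

lemma descentPoly_or (h : ∀ π, P π → ¬ Q π) :
    descentPoly (fun π => P π ∨ Q π) = descentPoly P + descentPoly Q := by
  simp only [descentPoly, filter_or]
  exact sum_union (disjoint_filter.2 fun π _ => h π)

lemma descentPoly_and_eq_add (P Q R : Perm (Fin n) → Prop) :
    descentPoly (fun π => P π ∧ R π) =
      descentPoly (fun π => (P π ∧ ¬ Q π) ∧ R π) + descentPoly (fun π => (P π ∧ Q π) ∧ R π) := by
  rw [← descentPoly_or fun π h h' => h.1.2 h'.1.2]
  exact descentPoly_congr fun π => by tauto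

lemma descentPoly_and_comp {κ : Type*} [Fintype κ] (P : Perm (Fin n) → Prop)
    (f : Perm (Fin n) → κ) (p : κ → Prop) :
    descentPoly (fun π => P π ∧ p (f π)) = ∑ b with p b, descentPoly fun π => P π ∧ f π = b := by
  simp only [descentPoly, ← filter_filter]
  simpa only [mem_filter_univ] using
    (sum_fiberwise_eq_sum_filter {π | P π} {b | p b} f fun π => (X : ℕ[X]) ^ des π).symm

lemma descentPoly_and_comp_congr {κ : Type*} [Finite κ] {f : Perm (Fin n) → κ}
    (h : ∀ b, descentPoly (fun π => P π ∧ f π = b) = descentPoly fun π => Q π ∧ f π = b)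
    (p : κ → Prop) :
    descentPoly (fun π => P π ∧ p (f π)) = descentPoly fun π => Q π ∧ p (f π) := by
  have := Fintype.ofFinite κ
  simp only [descentPoly_and_comp, h]

end DescentPoly

section Prepend

variable {n : ℕ}

lemma covBy_succAbove_iff {a : Fin (n + 1)} {b : Fin n} :
    a ⋖ a.succAbove b ↔ b.castSucc = a := by
  rw [Fin.covBy_iff, Nat.covBy_iff_add_one_eq, Fin.ext_iff, Fin.succAbove]
  split_ifs with h <;> simp only [Fin.lt_def, Fin.val_castSucc, Fin.val_succ] at h ⊢ <;> omega

/-- The permutation with first letter `a` whose remaining letters are ordered like `σ`. -/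
def prepend (a : Fin (n + 1)) (σ : Perm (Fin n)) : Perm (Fin (n + 1)) :=
  (finSuccEquiv n).trans (σ.optionCongr.trans (finSuccEquiv' a).symm)

@[simp]
lemma prepend_zero (a : Fin (n + 1)) (σ : Perm (Fin n)) : prepend a σ 0 = a := by
  simp [prepend]

@[simp]
lemma prepend_succ (a : Fin (n + 1)) (σ : Perm (Fin n)) (i : Fin n) :
    prepend a σ i.succ = a.succAbove (σ i) := by
  simp [prepend]

@[simp]
lemma prepend_mk_succ (a : Fin (n + 1)) (σ : Perm (Fin n)) {i : ℕ} (hi : i + 1 < n + 1) :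
    prepend a σ ⟨i + 1, hi⟩ = a.succAbove (σ ⟨i, by omega⟩) :=
  prepend_succ a σ ⟨i, by omega⟩

@[simp]
lemma prepend_one (a : Fin (n + 2)) (σ : Perm (Fin (n + 1))) :
    prepend a σ 1 = a.succAbove (σ 0) :=
  prepend_succ a σ 0

lemma prepend_injective (a : Fin (n + 1)) : Function.Injective (prepend a) := by
  intro σ τ h
  ext i
  have hi : a.succAbove (σ i) = a.succAbove (τ i) := by
    rw [← prepend_succ, ← prepend_succ, h]
  rw [Fin.succAbove_right_injective hi]

lemma exists_prepend_eq (π : Perm (Fin (n + 1))) : ∃ σ, prepend (π 0) σ = π := by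
  let e : Perm (Option (Fin n)) := (finSuccEquiv n).symm.trans (π.trans (finSuccEquiv' (π 0)))
  have he : e none = none := by simp [e]
  refine ⟨removeNone e, ?_⟩
  have hopt : (removeNone e).optionCongr = e := by
    simpa only [he, swap_self, ← Perm.one_def, one_mul] using map_equiv_removeNone e
  ext i
  simp [prepend, hopt, e]

lemma descentPoly_and_zero_eq {P : Perm (Fin (n + 1)) → Prop} {Q : Perm (Fin n) → Prop}
    {a : Fin (n + 1)} {d : ℕ} (hPQ : ∀ σ, P (prepend a σ) ↔ Q σ)
    (hdes : ∀ σ, Q σ → des (prepend a σ) = des σ + d) :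
    descentPoly (fun π => P π ∧ π 0 = a) = X ^ d * descentPoly Q := by
  rw [descentPoly, descentPoly, mul_sum]
  symm
  refine sum_bij (fun σ _ => prepend a σ) (by simp [hPQ])
    (fun σ _ τ _ h => prepend_injective a h) (fun π hπ => ?_) fun σ hσ => ?_
  · obtain ⟨hP, rfl⟩ : P π ∧ π 0 = a := by simpa using hπ
    obtain ⟨σ, hσ⟩ := exists_prepend_eq π
    exact ⟨σ, by rwa [mem_filter_univ, ← hPQ, hσ], hσ⟩
  · rw [hdes σ (mem_filter.1 hσ).2, pow_add, mul_comm]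

lemma des_prepend (a : Fin (n + 2)) (σ : Perm (Fin (n + 1))) :
    des (prepend a σ) = des σ + if (σ 0).castSucc < a then 1 else 0 := by
  simp [des, Fin.card_filter_univ_succ, Fin.succAbove_lt_iff_castSucc_lt, add_ite]

lemma zero_lt_one_prepend_iff (a : Fin (n + 2)) (σ : Perm (Fin (n + 1))) :
    prepend a σ 0 < prepend a σ 1 ↔ a ≤ (σ 0).castSucc := by
  rw [prepend_zero, prepend_one, Fin.lt_succAbove_iff_le_castSucc]

lemma descentPoly_not_ascent_zero_eq (P : Perm (Fin (n + 2)) → Prop) (a : Fin (n + 2)) :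
    descentPoly (fun π => (P π ∧ ¬ π 0 < π 1) ∧ π 0 = a) =
      X * descentPoly fun σ : Perm (Fin (n + 1)) => P (prepend a σ) ∧ (σ 0).castSucc < a := by
  rw [← pow_one (X : ℕ[X])]
  refine descentPoly_and_zero_eq (fun σ => ?_) fun σ hσ => ?_
  · rw [zero_lt_one_prepend_iff, not_le]
  · rw [des_prepend, if_pos hσ.2]

lemma descentPoly_ascent_zero_eq (P : Perm (Fin (n + 2)) → Prop) (a : Fin (n + 2)) :
    descentPoly (fun π => (P π ∧ π 0 < π 1) ∧ π 0 = a) =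
      descentPoly fun σ : Perm (Fin (n + 1)) => P (prepend a σ) ∧ a ≤ (σ 0).castSucc := by
  rw [← one_mul (descentPoly fun σ => P (prepend a σ) ∧ _), ← pow_zero X]
  refine descentPoly_and_zero_eq (fun σ => ?_) fun σ hσ => ?_
  · rw [zero_lt_one_prepend_iff]
  · rw [des_prepend, if_neg hσ.2.not_gt]

end Prepend

section Avoidance

variable {n : ℕ}

lemma exists_two_le_apply_eq {σ : Perm (Fin (n + 1))} {c : Fin (n + 1)} (h₀ : c ≠ σ 0)
    (h₁ : c ≠ σ 1) : ∃ (j : ℕ) (hj : j < n + 1), 2 ≤ j ∧ σ ⟨j, hj⟩ = c := by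
  obtain ⟨⟨j, hj⟩, rfl⟩ := σ.surjective c
  refine ⟨j, hj, ?_, rfl⟩
  by_contra! hlt
  interval_cases j
  · exact h₀ rfl
  · exact h₁ (congrArg σ (Fin.ext (Nat.mod_eq_of_lt hj).symm))

/-- In length one, `1 = 0` in `Fin 1`, so that `σ 0 < σ 1` is false there. -/
lemma avoidsA_prepend_iff (a : Fin (n + 2)) (σ : Perm (Fin (n + 1))) :
    AvoidsA (prepend a σ) ↔ AvoidsA σ ∧ (σ 0 < σ 1 → (σ 0).castSucc ≤ a) := by
  refine ⟨fun H => ⟨?_, fun hasc => ?_⟩, ?_⟩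
  · rintro ⟨i, j, hj, hij, h⟩
    exact H ⟨i + 1, j + 1, by omega, by omega, by simpa using h⟩
  · by_contra! hlt
    obtain ⟨c, hca⟩ := Fin.exists_castSucc_eq.2 (Fin.ne_last_of_lt hlt)
    have hc : c < σ 0 := Fin.castSucc_lt_castSucc_iff.1 (hca ▸ hlt)
    obtain ⟨j, hj, hj2, rfl⟩ := exists_two_le_apply_eq hc.ne (hc.trans hasc).ne
    obtain ⟨m, rfl⟩ : ∃ m, n = m + 1 := ⟨n - 1, by omega⟩
    refine H ⟨0, j + 1, by omega, by omega, ?_⟩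
    simpa [Fin.lt_succAbove_iff_le_castSucc] using ⟨hca.ge, hc, hasc⟩
  · rintro ⟨H, hle⟩ ⟨i, j, hj, hij, h⟩
    obtain ⟨m, rfl⟩ : ∃ m, n = m + 1 := ⟨n - 1, by omega⟩
    obtain ⟨j, rfl⟩ : ∃ j', j = j' + 1 := ⟨j - 1, by omega⟩
    rcases i with _ | i
    · obtain ⟨haj, hj0, h01⟩ : a ≤ (σ ⟨j, by omega⟩).castSucc ∧
          σ ⟨j, by omega⟩ < σ 0 ∧ σ 0 < σ 1 := by
        simpa [Fin.lt_succAbove_iff_le_castSucc] using h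
      exact (hle h01).not_gt (haj.trans_lt hj0)
    · exact H ⟨i, j, by omega, by omega, by simpa using h⟩

lemma avoidsB_prepend_iff (a : Fin (n + 2)) (σ : Perm (Fin (n + 1))) :
    AvoidsB (prepend a σ) ↔
      AvoidsB σ ∧ (σ 0 < σ 1 → a ≤ (σ 0).castSucc → σ 0 ⋖ σ 1) := by
  refine ⟨fun H => ⟨?_, fun hasc hle => ?_⟩, ?_⟩
  · rintro ⟨i, j, hj, hij, h⟩
    exact H ⟨i + 1, j + 1, by omega, by omega, by simpa using h⟩
  · by_contra hcov
    obtain ⟨c, h0c, hc1⟩ := exists_lt_lt_of_not_covBy hasc hcov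
    obtain ⟨j, hj, hj2, rfl⟩ := exists_two_le_apply_eq h0c.ne' hc1.ne
    obtain ⟨m, rfl⟩ : ∃ m, n = m + 1 := ⟨n - 1, by omega⟩
    refine H ⟨0, j + 1, by omega, by omega, ?_⟩
    simpa [Fin.lt_succAbove_iff_le_castSucc] using ⟨hle, h0c, hc1⟩
  · rintro ⟨H, hcov⟩ ⟨i, j, hj, hij, h⟩
    obtain ⟨m, rfl⟩ : ∃ m, n = m + 1 := ⟨n - 1, by omega⟩
    obtain ⟨j, rfl⟩ : ∃ j', j = j' + 1 := ⟨j - 1, by omega⟩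
    rcases i with _ | i
    · obtain ⟨ha0, h0j, hj1⟩ : a ≤ (σ 0).castSucc ∧
          σ 0 < σ ⟨j, by omega⟩ ∧ σ ⟨j, by omega⟩ < σ 1 := by
        simpa [Fin.lt_succAbove_iff_le_castSucc] using h
      exact (hcov (h0j.trans hj1) ha0).2 h0j hj1
    · exact H ⟨i, j, by omega, by omega, by simpa using h⟩

lemma descentPoly_avoidsA_not_ascent (a : Fin (n + 2)) :
    descentPoly (fun π : Perm (Fin (n + 2)) => (AvoidsA π ∧ ¬ π 0 < π 1) ∧ π 0 = a) =
      X * descentPoly fun σ : Perm (Fin (n + 1)) => AvoidsA σ ∧ (σ 0).castSucc < a := by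
  rw [descentPoly_not_ascent_zero_eq]
  refine congrArg _ (descentPoly_congr fun σ => ?_)
  rw [avoidsA_prepend_iff]
  exact ⟨fun h => ⟨h.1.1, h.2⟩, fun h => ⟨⟨h.1, fun _ => h.2.le⟩, h.2⟩⟩

lemma descentPoly_avoidsB_not_ascent (a : Fin (n + 2)) :
    descentPoly (fun π : Perm (Fin (n + 2)) => (AvoidsB π ∧ ¬ π 0 < π 1) ∧ π 0 = a) =
      X * descentPoly fun σ : Perm (Fin (n + 1)) => AvoidsB σ ∧ (σ 0).castSucc < a := by
  rw [descentPoly_not_ascent_zero_eq]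
  refine congrArg _ (descentPoly_congr fun σ => ?_)
  rw [avoidsB_prepend_iff]
  exact ⟨fun h => ⟨h.1.1, h.2⟩, fun h => ⟨⟨h.1, fun _ h' => absurd h' h.2.not_ge⟩, h.2⟩⟩

lemma descentPoly_avoidsA_ascent (a : Fin (n + 2)) :
    descentPoly (fun π : Perm (Fin (n + 2)) => (AvoidsA π ∧ π 0 < π 1) ∧ π 0 = a) =
      descentPoly (fun σ : Perm (Fin (n + 1)) =>
        (AvoidsA σ ∧ ¬ σ 0 < σ 1) ∧ a ≤ (σ 0).castSucc) +
      descentPoly (fun σ : Perm (Fin (n + 1)) => (AvoidsA σ ∧ σ 0 < σ 1) ∧ (σ 0).castSucc = a) := by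
  rw [descentPoly_ascent_zero_eq, ← descentPoly_or fun σ h h' => h.1.2 h'.1.2]
  refine descentPoly_congr fun σ => ?_
  rw [avoidsA_prepend_iff, le_antisymm_iff]
  tauto

lemma descentPoly_avoidsB_ascent (a : Fin (n + 2)) :
    descentPoly (fun π : Perm (Fin (n + 2)) => (AvoidsB π ∧ π 0 < π 1) ∧ π 0 = a) =
      descentPoly (fun σ : Perm (Fin (n + 1)) =>
        (AvoidsB σ ∧ ¬ σ 0 < σ 1) ∧ a ≤ (σ 0).castSucc) +
      descentPoly (fun σ : Perm (Fin (n + 1)) => (AvoidsB σ ∧ σ 0 ⋖ σ 1) ∧ a ≤ (σ 0).castSucc) := by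
  rw [descentPoly_ascent_zero_eq, ← descentPoly_or fun σ h h' => h.1.2 h'.1.2.lt]
  refine descentPoly_congr fun σ => ?_
  have hlt : σ 0 ⋖ σ 1 → σ 0 < σ 1 := CovBy.lt
  rw [avoidsB_prepend_iff]
  tauto

lemma descentPoly_avoidsB_succession (a : Fin (n + 2)) :
    descentPoly (fun π : Perm (Fin (n + 2)) => (AvoidsB π ∧ π 0 ⋖ π 1) ∧ π 0 = a) =
      descentPoly (fun σ : Perm (Fin (n + 1)) =>
        (AvoidsB σ ∧ ¬ σ 0 < σ 1) ∧ (σ 0).castSucc = a) +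
      descentPoly (fun σ : Perm (Fin (n + 1)) => (AvoidsB σ ∧ σ 0 ⋖ σ 1) ∧ (σ 0).castSucc = a) := by
  have hasc : descentPoly (fun π : Perm (Fin (n + 2)) => (AvoidsB π ∧ π 0 ⋖ π 1) ∧ π 0 = a) =
      descentPoly fun π => ((AvoidsB π ∧ π 0 ⋖ π 1) ∧ π 0 < π 1) ∧ π 0 = a :=
    descentPoly_congr fun π => by
      rw [and_iff_left_of_imp fun h : AvoidsB π ∧ π 0 ⋖ π 1 => h.2.lt]
  rw [hasc, descentPoly_ascent_zero_eq, ← descentPoly_or fun σ h h' => h.1.2 h'.1.2.lt]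
  refine descentPoly_congr fun σ => ?_
  have hlt : σ 0 ⋖ σ 1 → σ 0 < σ 1 := CovBy.lt
  have hle : (σ 0).castSucc = a → a ≤ (σ 0).castSucc := ge_of_eq
  rw [avoidsB_prepend_iff, prepend_zero, prepend_one, covBy_succAbove_iff]
  tauto

lemma descentPoly_avoidsB_ascent_eq_succession (a : Fin (n + 1)) :
    descentPoly (fun π : Perm (Fin (n + 1)) => (AvoidsB π ∧ π 0 < π 1) ∧ π 0 = a) =
      descentPoly fun π => (AvoidsB π ∧ π 0 ⋖ π 1) ∧ a ≤ π 0 := by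
  cases n with
  | zero =>
    have hno (π : Perm (Fin 1)) : ¬ π 0 < π 1 := lt_irrefl _
    exact descentPoly_congr fun π => iff_of_false (fun h => hno π h.1.2) fun h => hno π h.1.2.lt
  | succ n =>
    rw [descentPoly_avoidsB_ascent, descentPoly_and_comp _ (fun π => π 0) (a ≤ ·),
      descentPoly_and_comp _ (fun σ => (σ 0).castSucc) (a ≤ ·),
      descentPoly_and_comp _ (fun σ => (σ 0).castSucc) (a ≤ ·), ← sum_add_distrib]
    exact sum_congr rfl fun b _ => (descentPoly_avoidsB_succession b).symm

lemma descentPoly_avoidsB_ascent_castSucc_eq (a : Fin (n + 2)) :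
    descentPoly (fun σ : Perm (Fin (n + 1)) => (AvoidsB σ ∧ σ 0 < σ 1) ∧ (σ 0).castSucc = a) =
      descentPoly fun σ => (AvoidsB σ ∧ σ 0 ⋖ σ 1) ∧ a ≤ (σ 0).castSucc := by
  cases a using Fin.lastCases with
  | last => simp
  | cast a => simpa using descentPoly_avoidsB_ascent_eq_succession a

lemma descentPoly_avoidsA_eq_avoidsB_and_ascent (a : Fin (n + 1)) :
    descentPoly (fun π : Perm (Fin (n + 1)) => (AvoidsA π ∧ ¬ π 0 < π 1) ∧ π 0 = a) =
        descentPoly (fun π => (AvoidsB π ∧ ¬ π 0 < π 1) ∧ π 0 = a) ∧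
      descentPoly (fun π : Perm (Fin (n + 1)) => (AvoidsA π ∧ π 0 < π 1) ∧ π 0 = a) =
        descentPoly fun π => (AvoidsB π ∧ π 0 < π 1) ∧ π 0 = a := by
  induction n with
  | zero =>
    have hAB (π : Perm (Fin 1)) : AvoidsA π ↔ AvoidsB π :=
      iff_of_true (by rintro ⟨_, _, _, _, _⟩; omega) (by rintro ⟨_, _, _, _, _⟩; omega)
    simp only [hAB, and_self]
  | succ n ih =>
    have hdesc := descentPoly_and_comp_congr fun b => (ih b).1
    have hasc := descentPoly_and_comp_congr fun b => (ih b).2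
    constructor
    · rw [descentPoly_avoidsA_not_ascent, descentPoly_avoidsB_not_ascent,
        descentPoly_and_eq_add _ (fun σ => σ 0 < σ 1), hdesc (·.castSucc < a),
        hasc (·.castSucc < a), ← descentPoly_and_eq_add]
    · rw [descentPoly_avoidsA_ascent, descentPoly_avoidsB_ascent, hdesc (a ≤ ·.castSucc),
        hasc (·.castSucc = a), descentPoly_avoidsB_ascent_castSucc_eq]

theorem descentPoly_avoidsA_eq_avoidsB (n : ℕ) :
    descentPoly (AvoidsA (n := n + 1)) = descentPoly (AvoidsB (n := n + 1)) := by
  have hzero (a : Fin (n + 1)) : descentPoly (fun π : Perm (Fin (n + 1)) => AvoidsA π ∧ π 0 = a) =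
      descentPoly fun π => AvoidsB π ∧ π 0 = a := by
    obtain ⟨hdesc, hasc⟩ := descentPoly_avoidsA_eq_avoidsB_and_ascent a
    rw [descentPoly_and_eq_add _ (fun π => π 0 < π 1), hdesc, hasc, ← descentPoly_and_eq_add]
  simpa only [and_true] using descentPoly_and_comp_congr hzero fun _ => True

end Avoidance

end QuasiConsecutive

/-- The quasi-consecutive patterns 1̲3̲4̲2 and 1̲2̲4̲3 are des-Wilf-equivalent. -/
theorem statement17 (n : ℕ) (hn : 1 ≤ n) (k : ℕ) :
    Nat.card {π : Equiv.Perm (Fin n) // AvoidsA π ∧ des π = k} =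
      Nat.card {π : Equiv.Perm (Fin n) // AvoidsB π ∧ des π = k} := by
  obtain ⟨m, rfl⟩ := Nat.exists_eq_add_of_le' hn
  rw [← QuasiConsecutive.coeff_descentPoly, QuasiConsecutive.descentPoly_avoidsA_eq_avoidsB,
    QuasiConsecutive.coeff_descentPoly]
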